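/- arXiv:1209.4251 — 2 statements merged into one kernel-verified Lean document; each statement's English description precedes it below -/
import Mathlib

section
/- (Helicity conservation on closed moving 3-surfaces.) Let n ≥ 1 and let u : ℝ × ℝⁿ → ℝⁿ be smooth with ∂ₜu + (u·∇)u = −∇h for some continuously differentiable h : ℝ × ℝⁿ → ℝ. Let Ψ : ℝ × ℝ³ → ℝⁿ be twice continuously differentiable, 1-periodic in each of the three surface parameters s₁, s₂, s₃, and satisfy ∂ₜΨ(t,s) = u(t, Ψ(t,s)) for all (t,s). Define the helicity density as the pullback of the 3-form u♭ ∧ ω: H(t,s) = ⟨u, ∂₁Ψ⟩ ω(∂₂Ψ, ∂₃Ψ) − ⟨u, ∂₂Ψ⟩ ω(∂₁Ψ, ∂₃Ψ) + ⟨u, ∂₃Ψ⟩ ω(∂₁Ψ, ∂₂Ψ), where u and ω are evaluated at (t, Ψ(t,s)) and ∂ₐΨ at (t,s). Then t ↦ ∫_{[0,1]³} H(t,s) ds is constant. -/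
open scoped RealInnerProductSpace

/-- The vorticity 2-form `ω(t,x)(v,w) = ⟨D_x u v, w⟩ − ⟨D_x u w, v⟩` of a
time-dependent velocity field. -/
noncomputable def vorticity2Form {n : ℕ}
    (u : ℝ × EuclideanSpace ℝ (Fin n) → EuclideanSpace ℝ (Fin n))
    (t : ℝ) (x v w : EuclideanSpace ℝ (Fin n)) : ℝ :=
  ⟪fderiv ℝ (fun y => u (t, y)) x v, w⟫ - ⟪fderiv ℝ (fun y => u (t, y)) x w, v⟫

/-- The helicity density: pullback of the 3-form `u♭ ∧ ω` along a moving
parametrized 3-surface `Ψ`. -/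
noncomputable def helicityDensity {n : ℕ}
    (u : ℝ × EuclideanSpace ℝ (Fin n) → EuclideanSpace ℝ (Fin n))
    (Ψ : ℝ × (Fin 3 → ℝ) → EuclideanSpace ℝ (Fin n))
    (t : ℝ) (s : Fin 3 → ℝ) : ℝ :=
  ⟪u (t, Ψ (t, s)), fderiv ℝ (fun s' => Ψ (t, s')) s (Pi.single 0 1)⟫ *
      vorticity2Form u t (Ψ (t, s))
        (fderiv ℝ (fun s' => Ψ (t, s')) s (Pi.single 1 1))
        (fderiv ℝ (fun s' => Ψ (t, s')) s (Pi.single 2 1)) -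
    ⟪u (t, Ψ (t, s)), fderiv ℝ (fun s' => Ψ (t, s')) s (Pi.single 1 1)⟫ *
      vorticity2Form u t (Ψ (t, s))
        (fderiv ℝ (fun s' => Ψ (t, s')) s (Pi.single 0 1))
        (fderiv ℝ (fun s' => Ψ (t, s')) s (Pi.single 2 1)) +
    ⟪u (t, Ψ (t, s)), fderiv ℝ (fun s' => Ψ (t, s')) s (Pi.single 2 1)⟫ *
      vorticity2Form u t (Ψ (t, s))
        (fderiv ℝ (fun s' => Ψ (t, s')) s (Pi.single 0 1))
        (fderiv ℝ (fun s' => Ψ (t, s')) s (Pi.single 1 1))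

/-!
Pull the velocity 1-form and the vorticity 2-form back to `α` and `ω` on `ℝ × P`, where `P` is the
parameter space of the surface. On time slices the Euler equations say that `∂ₜα = d(½|u|² - h)` and
that the contraction of `ω` with `∂ₜ` is `-d(½|u|² + h)`. The latter and `dω = 0` give `∂ₜω = 0` on
slices, whence `∂ₜ(α ∧ ω) = d((½|u|² - h) ω)`, and the integral of this divergence over a period
cube vanishes.
-/

open MeasureTheory Set

section Calculus

variable {𝕜 E F G : Type*} [NontriviallyNormedField 𝕜] [NormedAddCommGroup E] [NormedSpace 𝕜 E]
  [NormedAddCommGroup F] [NormedSpace 𝕜 F] [NormedAddCommGroup G] [NormedSpace 𝕜 G]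

lemma contDiff_fderiv_apply_const {φ : E → F} (hφ : ContDiff 𝕜 2 φ) (v : E) :
    ContDiff 𝕜 1 fun p => fderiv 𝕜 φ p v :=
  (hφ.fderiv_right (by norm_num)).clm_apply contDiff_const

lemma fderiv_slice_apply {φ : E × F → G} {x : E} {y : F} (hφ : DifferentiableAt 𝕜 φ (x, y))
    (v : F) : fderiv 𝕜 (fun z => φ (x, z)) y v = fderiv 𝕜 φ (x, y) (0, v) := by
  have hslice := hφ.hasFDerivAt.comp y (hasFDerivAt_prodMk_right x y)
  exact DFunLike.congr_fun hslice.fderiv v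

lemma hasDerivAt_slice {φ : 𝕜 × E → F} {t : 𝕜} {x : E} (hφ : DifferentiableAt 𝕜 φ (t, x)) :
    HasDerivAt (fun τ => φ (τ, x)) (fderiv 𝕜 φ (t, x) (1, 0)) t :=
  hφ.hasFDerivAt.comp_hasDerivAt t ((hasDerivAt_id t).prodMk (hasDerivAt_const t x))

lemma fderiv_comp_fst_prodMk_apply {H : Type*} [NormedAddCommGroup H] [NormedSpace 𝕜 H]
    {k : H × F → G} {Φ : H × E → F} {p : H × E}
    (hk : DifferentiableAt 𝕜 k (p.1, Φ p)) (hΦ : DifferentiableAt 𝕜 Φ p) (v : H × E) :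
    fderiv 𝕜 (fun q => k (q.1, Φ q)) p v = fderiv 𝕜 k (p.1, Φ p) (v.1, fderiv 𝕜 Φ p v) := by
  have hcomp := hk.hasFDerivAt.comp p (hasFDerivAt_fst.prodMk hΦ.hasFDerivAt)
  exact DFunLike.congr_fun hcomp.fderiv v

lemma periodic_fderiv_apply {φ : E → F} {c : E} (hφ : Function.Periodic φ c) (v : E) :
    Function.Periodic (fun p => fderiv 𝕜 φ p v) c := fun p => by
  simp only [← fderiv_comp_add_right, hφ _]

lemma fderiv_fderiv_apply_comm {E F : Type*} [NormedAddCommGroup E] [NormedSpace ℝ E]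
    [NormedAddCommGroup F] [NormedSpace ℝ F] {φ : E → F} (hφ : ContDiff ℝ 2 φ) (p v w : E) :
    fderiv ℝ (fun q => fderiv ℝ φ q v) p w = fderiv ℝ (fun q => fderiv ℝ φ q w) p v := by
  have hdiff : DifferentiableAt ℝ (fderiv ℝ φ) p :=
    (hφ.fderiv_right (m := 1) (by norm_num)).differentiable_one p
  have hsymm : IsSymmSndFDerivAt ℝ φ p := hφ.contDiffAt.isSymmSndFDerivAt (by simp)
  simpa [fderiv_clm_apply hdiff (differentiableAt_const _)] using hsymm.eq w v

end Calculus

section Integration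

variable {G : Type*} [NormedAddCommGroup G] [NormedSpace ℝ G]

lemma hasDerivAt_setIntegral_of_continuous_deriv {X : Type*} [TopologicalSpace X] [T2Space X]
    [MeasurableSpace X] [OpensMeasurableSpace X] {μ : Measure X} [IsFiniteMeasureOnCompacts μ]
    {K : Set X} (hK : IsCompact K) {φ φ' : ℝ × X → G} (hφ : Continuous φ) (hφ' : Continuous φ')
    (hderiv : ∀ t s, HasDerivAt (fun τ => φ (τ, s)) (φ' (t, s)) t) (t : ℝ) :
    HasDerivAt (fun τ => ∫ s in K, φ (τ, s) ∂μ) (∫ s in K, φ' (t, s) ∂μ) t := by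
  have hint (ψ : ℝ × X → G) (hψ : Continuous ψ) (τ : ℝ) :
      IntegrableOn (fun s => ψ (τ, s)) K μ :=
    (hψ.comp (Continuous.prodMk_right τ)).continuousOn.integrableOn_compact hK
  obtain ⟨C, hC⟩ := ((isCompact_closedBall t 1).prod hK).exists_bound_of_continuousOn
    hφ'.continuousOn
  have hbound : ∀ᵐ s ∂μ.restrict K, ∀ τ ∈ Metric.closedBall t 1, ‖φ' (τ, s)‖ ≤ C :=
    ae_restrict_of_forall_mem hK.measurableSet fun s hs τ hτ => hC (τ, s) ⟨hτ, hs⟩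
  exact (hasDerivAt_integral_of_dominated_loc_of_deriv_le (Metric.closedBall_mem_nhds t one_pos)
    (.of_forall fun τ => (hint φ hφ τ).aestronglyMeasurable) (hint φ hφ t)
    (hint φ' hφ' t).aestronglyMeasurable hbound
    (integrableOn_const hK.measure_lt_top.ne)
    (.of_forall fun s τ _ => hderiv τ s)).2

lemma integral_divergence_eq_zero_of_periodic {m : ℕ}
    {X : Fin (m + 1) → (Fin (m + 1) → ℝ) → G} (hX : ∀ i, ContDiff ℝ 1 (X i))
    (hper : ∀ i, Function.Periodic (X i) (Pi.single i 1)) :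
    ∫ s in Icc (0 : Fin (m + 1) → ℝ) 1, ∑ i, fderiv ℝ (X i) s (Pi.single i 1) = 0 := by
  have hcont : Continuous fun s => ∑ i, fderiv ℝ (X i) s (Pi.single i 1) :=
    continuous_finsetSum _ fun i _ =>
      ((hX i).continuous_fderiv one_ne_zero).clm_apply continuous_const
  rw [integral_divergence_of_hasFDerivAt_off_countable' 0 1 zero_le_one X
    (fun i => fderiv ℝ (X i)) ∅ countable_empty (fun i => (hX i).continuous.continuousOn)
    (fun s _ i => ((hX i).differentiable_one s).hasFDerivAt)
    (hcont.continuousOn.integrableOn_compact isCompact_Icc)]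
  refine Finset.sum_eq_zero fun i _ => sub_eq_zero.2 (integral_congr_ae (.of_forall fun s => ?_))
  have hface : i.insertNth (α := fun _ => ℝ) 1 s =
      i.insertNth (α := fun _ => ℝ) 0 s + Pi.single i 1 := by
    ext j
    refine Fin.succAboveCases i ?_ (fun k => ?_) j <;> simp [Fin.succAbove_ne]
  simpa only [Pi.one_apply, Pi.zero_apply, hface] using hper i (i.insertNth (α := fun _ => ℝ) 0 s)

end Integration

section Pullback

variable {E F : Type*} [NormedAddCommGroup E] [NormedSpace ℝ E]
  [NormedAddCommGroup F] [InnerProductSpace ℝ F]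

/-- The pullback `Φ^* u♭` of the velocity 1-form along `Φ`, where `V = u ∘ Φ` is the velocity
seen from the parameter space. -/
noncomputable def pullbackVelocity (Φ V : E → F) (p v : E) : ℝ :=
  ⟪V p, fderiv ℝ Φ p v⟫

/-- The pullback `Φ^* ω` of the vorticity 2-form along `Φ`. By the chain rule it depends on the
velocity field only through `V = u ∘ Φ`. -/
noncomputable def pullbackVorticity (Φ V : E → F) (p v w : E) : ℝ :=
  ⟪fderiv ℝ V p v, fderiv ℝ Φ p w⟫ - ⟪fderiv ℝ V p w, fderiv ℝ Φ p v⟫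

/-- The pullback `Φ^* (u♭ ∧ ω)` of the helicity 3-form along `Φ`, with `V = u ∘ Φ`. -/
noncomputable def pullbackHelicity (Φ V : E → F) (p a b c : E) : ℝ :=
  pullbackVelocity Φ V p a * pullbackVorticity Φ V p b c +
      pullbackVelocity Φ V p b * pullbackVorticity Φ V p c a +
    pullbackVelocity Φ V p c * pullbackVorticity Φ V p a b

variable {Φ V : E → F}

lemma pullbackVorticity_swap (p v w : E) :
    pullbackVorticity Φ V p v w = -pullbackVorticity Φ V p w v :=
  (neg_sub _ _).symm

lemma contDiff_pullbackVelocity (hΦ : ContDiff ℝ 2 Φ) (hV : ContDiff ℝ 1 V) (v : E) :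
    ContDiff ℝ 1 fun p => pullbackVelocity Φ V p v :=
  hV.inner ℝ (contDiff_fderiv_apply_const hΦ v)

lemma contDiff_pullbackVorticity (hΦ : ContDiff ℝ 2 Φ) (hV : ContDiff ℝ 2 V) (v w : E) :
    ContDiff ℝ 1 fun p => pullbackVorticity Φ V p v w :=
  ((contDiff_fderiv_apply_const hV v).inner ℝ (contDiff_fderiv_apply_const hΦ w)).sub
    ((contDiff_fderiv_apply_const hV w).inner ℝ (contDiff_fderiv_apply_const hΦ v))

lemma contDiff_pullbackHelicity (hΦ : ContDiff ℝ 2 Φ) (hV : ContDiff ℝ 2 V) (a b c : E) :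
    ContDiff ℝ 1 fun p => pullbackHelicity Φ V p a b c :=
  have hα := contDiff_pullbackVelocity hΦ (hV.of_le one_le_two)
  have hω := contDiff_pullbackVorticity hΦ hV
  (((hα a).mul (hω b c)).add ((hα b).mul (hω c a))).add ((hα c).mul (hω a b))

lemma periodic_pullbackVorticity {c : E} (hΦ : Function.Periodic Φ c)
    (hV : Function.Periodic V c) (v w : E) :
    Function.Periodic (fun p => pullbackVorticity Φ V p v w) c := fun p => by
  simp only [pullbackVorticity, periodic_fderiv_apply hΦ _ p, periodic_fderiv_apply hV _ p]

lemma fderiv_pullbackVorticity (hΦ : ContDiff ℝ 2 Φ) (hV : ContDiff ℝ 2 V) (p v w a : E) :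
    fderiv ℝ (fun q => pullbackVorticity Φ V q v w) p a =
      (⟪fderiv ℝ V p v, fderiv ℝ (fun q => fderiv ℝ Φ q w) p a⟫ +
          ⟪fderiv ℝ (fun q => fderiv ℝ V q v) p a, fderiv ℝ Φ p w⟫) -
        (⟪fderiv ℝ V p w, fderiv ℝ (fun q => fderiv ℝ Φ q v) p a⟫ +
          ⟪fderiv ℝ (fun q => fderiv ℝ V q w) p a, fderiv ℝ Φ p v⟫) := by
  have hdΦ (x : E) := (contDiff_fderiv_apply_const hΦ x).differentiable_one p
  have hdV (x : E) := (contDiff_fderiv_apply_const hV x).differentiable_one p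
  simp only [pullbackVorticity]
  rw [fderiv_fun_sub ((hdV v).inner ℝ (hdΦ w)) ((hdV w).inner ℝ (hdΦ v)), sub_apply,
    fderiv_inner_apply ℝ (hdV v) (hdΦ w), fderiv_inner_apply ℝ (hdV w) (hdΦ v)]

lemma pullbackVorticity_closed (hΦ : ContDiff ℝ 2 Φ) (hV : ContDiff ℝ 2 V) (p a b c : E) :
    fderiv ℝ (fun q => pullbackVorticity Φ V q b c) p a +
        fderiv ℝ (fun q => pullbackVorticity Φ V q c a) p b +
      fderiv ℝ (fun q => pullbackVorticity Φ V q a b) p c = 0 := by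
  simp only [fderiv_pullbackVorticity hΦ hV]
  rw [fderiv_fderiv_apply_comm hΦ p b a, fderiv_fderiv_apply_comm hΦ p c a,
    fderiv_fderiv_apply_comm hΦ p c b, fderiv_fderiv_apply_comm hV p b a,
    fderiv_fderiv_apply_comm hV p c a, fderiv_fderiv_apply_comm hV p c b]
  ring

end Pullback

section Flux

variable {P F : Type*} [NormedAddCommGroup F]

/-- The Lagrangian density `½|u|² - h` along the flow, for the velocity `V` and the enthalpy `g`
of the particle with label `s`. -/
noncomputable def lagrangianDensity (V : ℝ × P → F) (g : ℝ → P → ℝ) (t : ℝ) (s : P) : ℝ :=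
  ‖V (t, s)‖ ^ 2 / 2 - g t s

variable [NormedAddCommGroup P] [NormedSpace ℝ P] [InnerProductSpace ℝ F]

/-- The flux `(½|u|² - h) ω` whose divergence is the time derivative of the helicity density;
`helicityFlux Φ V g t v w` is its component transverse to `v` and `w`. -/
noncomputable def helicityFlux (Φ V : ℝ × P → F) (g : ℝ → P → ℝ) (t : ℝ) (v w s : P) : ℝ :=
  lagrangianDensity V g t s * pullbackVorticity Φ V (t, s) (0, v) (0, w)

lemma periodic_helicityFlux {Φ V : ℝ × P → F} {g : ℝ → P → ℝ} {t : ℝ} {c : P}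
    (hΦ : Function.Periodic Φ (0, c)) (hV : Function.Periodic V (0, c))
    (hg : Function.Periodic (g t) c) (v w : P) :
    Function.Periodic (helicityFlux Φ V g t v w) c := fun s => by
  have hω := periodic_pullbackVorticity hΦ hV (0, v) (0, w) (t, s)
  have hVs := hV (t, s)
  simp only [Prod.mk_add_mk, add_zero] at hω hVs
  simp only [helicityFlux, lagrangianDensity, hω, hVs, hg s]

end Flux

/-- The Euler equations in Lagrangian form. Here `Φ (t, s)` is the position at time `t` of the
particle labelled `s`, `V` its velocity and `g` the enthalpy it sees; the momentum equation
`∂ₜV = -∇h` is recorded only after pairing with the tangent vectors of the time slices. -/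
structure IsLagrangianEulerFlow {P F : Type*} [NormedAddCommGroup P] [NormedSpace ℝ P]
    [NormedAddCommGroup F] [InnerProductSpace ℝ F] (Φ V : ℝ × P → F) (g : ℝ → P → ℝ) : Prop where
  contDiff_position : ContDiff ℝ 2 Φ
  contDiff_velocity : ContDiff ℝ 2 V
  contDiff_enthalpy (t : ℝ) : ContDiff ℝ 2 (g t)
  fderiv_position_time (p : ℝ × P) : fderiv ℝ Φ p (1, 0) = V p
  fderiv_enthalpy (t : ℝ) (s v : P) :
    fderiv ℝ (g t) s v = -⟪fderiv ℝ V (t, s) (1, 0), fderiv ℝ Φ (t, s) (0, v)⟫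

namespace IsLagrangianEulerFlow

variable {P F : Type*} [NormedAddCommGroup P] [NormedSpace ℝ P]
  [NormedAddCommGroup F] [InnerProductSpace ℝ F] {Φ V : ℝ × P → F} {g : ℝ → P → ℝ}

lemma contDiff_velocity_slice (hflow : IsLagrangianEulerFlow Φ V g) (t : ℝ) :
    ContDiff ℝ 2 fun s => V (t, s) :=
  hflow.contDiff_velocity.comp (contDiff_prodMk_right t)

lemma contDiff_kineticEnergy (hflow : IsLagrangianEulerFlow Φ V g) (t : ℝ) :
    ContDiff ℝ 2 fun s => ‖V (t, s)‖ ^ 2 / 2 :=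
  ((hflow.contDiff_velocity_slice t).norm_sq ℝ).div_const 2

lemma fderiv_kineticEnergy (hflow : IsLagrangianEulerFlow Φ V g) (t : ℝ) (s v : P) :
    fderiv ℝ (fun s => ‖V (t, s)‖ ^ 2 / 2) s v = ⟪V (t, s), fderiv ℝ V (t, s) (0, v)⟫ := by
  have hV := hflow.contDiff_velocity.differentiable two_ne_zero (t, s)
  have hslice := (hflow.contDiff_velocity_slice t).differentiable two_ne_zero s
  have hkin := (hslice.hasFDerivAt.norm_sq.mul_const (1 / 2 : ℝ)).fderiv
  simp only [div_eq_mul_one_div (_ ^ 2), hkin]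
  simp [fderiv_slice_apply hV]

lemma fderiv_position_comm (hflow : IsLagrangianEulerFlow Φ V g) (p v : ℝ × P) :
    fderiv ℝ (fun q => fderiv ℝ Φ q v) p (1, 0) = fderiv ℝ V p v := by
  simp only [fderiv_fderiv_apply_comm hflow.contDiff_position p v, hflow.fderiv_position_time]


lemma contDiff_lagrangianDensity (hflow : IsLagrangianEulerFlow Φ V g) (t : ℝ) :
    ContDiff ℝ 2 (lagrangianDensity V g t) :=
  (hflow.contDiff_kineticEnergy t).sub (hflow.contDiff_enthalpy t)

lemma fderiv_lagrangianDensity (hflow : IsLagrangianEulerFlow Φ V g) (t : ℝ) (s v : P) :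
    fderiv ℝ (lagrangianDensity V g t) s v =
      ⟪V (t, s), fderiv ℝ V (t, s) (0, v)⟫ +
        ⟪fderiv ℝ V (t, s) (1, 0), fderiv ℝ Φ (t, s) (0, v)⟫ := by
  have hkin := (hflow.contDiff_kineticEnergy t).differentiable two_ne_zero s
  have hg := (hflow.contDiff_enthalpy t).differentiable two_ne_zero s
  unfold lagrangianDensity
  rw [fderiv_fun_sub hkin hg, sub_apply, hflow.fderiv_kineticEnergy, hflow.fderiv_enthalpy,
    sub_neg_eq_add]

lemma fderiv_pullbackVelocity_time (hflow : IsLagrangianEulerFlow Φ V g) (t : ℝ) (s v : P) :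
    fderiv ℝ (fun q => pullbackVelocity Φ V q (0, v)) (t, s) (1, 0) =
      fderiv ℝ (lagrangianDensity V g t) s v := by
  have hV := hflow.contDiff_velocity.differentiable two_ne_zero (t, s)
  have hDΦ := (contDiff_fderiv_apply_const hflow.contDiff_position (0, v)).differentiable_one (t, s)
  simp only [pullbackVelocity]
  rw [fderiv_inner_apply ℝ hV hDΦ, hflow.fderiv_position_comm, hflow.fderiv_lagrangianDensity]

lemma pullbackVorticity_time_left (hflow : IsLagrangianEulerFlow Φ V g) (t : ℝ) (s v : P) :
    pullbackVorticity Φ V (t, s) (1, 0) (0, v) =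
      -fderiv ℝ (fun s => ‖V (t, s)‖ ^ 2 / 2 + g t s) s v := by
  have hkin := (hflow.contDiff_kineticEnergy t).differentiable two_ne_zero s
  have hg := (hflow.contDiff_enthalpy t).differentiable two_ne_zero s
  rw [fderiv_fun_add hkin hg, add_apply, hflow.fderiv_kineticEnergy, hflow.fderiv_enthalpy,
    pullbackVorticity, hflow.fderiv_position_time, real_inner_comm (V (t, s))]
  ring

lemma fderiv_pullbackVorticity_time (hflow : IsLagrangianEulerFlow Φ V g) (t : ℝ) (s v w : P) :
    fderiv ℝ (fun q => pullbackVorticity Φ V q (0, v) (0, w)) (t, s) (1, 0) = 0 := by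
  have hω (a b : ℝ × P) : DifferentiableAt ℝ (fun q => pullbackVorticity Φ V q a b) (t, s) :=
    (contDiff_pullbackVorticity hflow.contDiff_position hflow.contDiff_velocity
      a b).differentiable_one (t, s)
  have hclosed := pullbackVorticity_closed hflow.contDiff_position hflow.contDiff_velocity
    (t, s) (1, 0) (0, v) (0, w)
  have hbernoulli : ContDiff ℝ 2 fun s => ‖V (t, s)‖ ^ 2 / 2 + g t s :=
    (hflow.contDiff_kineticEnergy t).add (hflow.contDiff_enthalpy t)
  rw [← fderiv_slice_apply (hω _ _), ← fderiv_slice_apply (hω _ _)] at hclosed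
  simp only [pullbackVorticity_swap (E := ℝ × P) _ (0, w) (1, 0), hflow.pullbackVorticity_time_left,
    fderiv_fun_neg, neg_apply, neg_neg] at hclosed
  rw [fderiv_fderiv_apply_comm hbernoulli s w v] at hclosed
  linarith

lemma fderiv_pullbackHelicity_time (hflow : IsLagrangianEulerFlow Φ V g) (t : ℝ) (s a b c : P) :
    fderiv ℝ (fun q => pullbackHelicity Φ V q (0, a) (0, b) (0, c)) (t, s) (1, 0) =
      fderiv ℝ (lagrangianDensity V g t) s a * pullbackVorticity Φ V (t, s) (0, b) (0, c) +
        fderiv ℝ (lagrangianDensity V g t) s b * pullbackVorticity Φ V (t, s) (0, c) (0, a) +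
      fderiv ℝ (lagrangianDensity V g t) s c * pullbackVorticity Φ V (t, s) (0, a) (0, b) := by
  have hα (v : ℝ × P) := (contDiff_pullbackVelocity hflow.contDiff_position
    (hflow.contDiff_velocity.of_le one_le_two) v).differentiable_one (t, s)
  have hω (v w : ℝ × P) := (contDiff_pullbackVorticity hflow.contDiff_position
    hflow.contDiff_velocity v w).differentiable_one (t, s)
  simp only [pullbackHelicity]
  rw [fderiv_fun_add (((hα _).fun_mul (hω _ _)).fun_add ((hα _).fun_mul (hω _ _)))
      ((hα _).fun_mul (hω _ _)),
    fderiv_fun_add ((hα _).fun_mul (hω _ _)) ((hα _).fun_mul (hω _ _)),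
    fderiv_fun_mul (hα _) (hω _ _), fderiv_fun_mul (hα _) (hω _ _), fderiv_fun_mul (hα _) (hω _ _)]
  simp only [add_apply, smul_apply, smul_eq_mul, hflow.fderiv_pullbackVelocity_time,
    hflow.fderiv_pullbackVorticity_time]
  ring

lemma contDiff_helicityFlux (hflow : IsLagrangianEulerFlow Φ V g) (t : ℝ) (v w : P) :
    ContDiff ℝ 1 (helicityFlux Φ V g t v w) :=
  ((hflow.contDiff_lagrangianDensity t).of_le one_le_two).mul
    ((contDiff_pullbackVorticity hflow.contDiff_position hflow.contDiff_velocity _ _).comp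
      (contDiff_prodMk_right t))

lemma fderiv_helicityFlux (hflow : IsLagrangianEulerFlow Φ V g) (t : ℝ) (s a v w : P) :
    fderiv ℝ (helicityFlux Φ V g t v w) s a =
      fderiv ℝ (lagrangianDensity V g t) s a * pullbackVorticity Φ V (t, s) (0, v) (0, w) +
        lagrangianDensity V g t s *
          fderiv ℝ (fun q => pullbackVorticity Φ V q (0, v) (0, w)) (t, s) (0, a) := by
  have hL := (hflow.contDiff_lagrangianDensity t).differentiable two_ne_zero s
  have hω := contDiff_pullbackVorticity hflow.contDiff_position hflow.contDiff_velocity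
    (0, v) (0, w)
  have hslice : DifferentiableAt ℝ (fun z => pullbackVorticity Φ V (t, z) (0, v) (0, w)) s :=
    (hω.comp (contDiff_prodMk_right t)).differentiable_one s
  unfold helicityFlux
  rw [fderiv_fun_mul hL hslice, ← fderiv_slice_apply (hω.differentiable_one (t, s))]
  simp only [add_apply, smul_apply, smul_eq_mul]
  ring

lemma fderiv_pullbackHelicity_time_eq_divergence (hflow : IsLagrangianEulerFlow Φ V g)
    (t : ℝ) (s a b c : P) :
    fderiv ℝ (fun q => pullbackHelicity Φ V q (0, a) (0, b) (0, c)) (t, s) (1, 0) =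
      fderiv ℝ (helicityFlux Φ V g t b c) s a + fderiv ℝ (helicityFlux Φ V g t c a) s b +
        fderiv ℝ (helicityFlux Φ V g t a b) s c := by
  rw [hflow.fderiv_pullbackHelicity_time]
  simp only [hflow.fderiv_helicityFlux]
  linear_combination (-lagrangianDensity V g t s) * pullbackVorticity_closed
    hflow.contDiff_position hflow.contDiff_velocity (t, s) (0, a) (0, b) (0, c)

end IsLagrangianEulerFlow

section UnitCube

variable {F : Type*} [NormedAddCommGroup F] [InnerProductSpace ℝ F]

/-- The helicity density on a 3-parameter surface: the component of the pulled-back helicity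
3-form on the coordinate vectors of `Fin 3 → ℝ`. -/
noncomputable def pullbackHelicityDensity (Φ V : ℝ × (Fin 3 → ℝ) → F) (p : ℝ × (Fin 3 → ℝ)) : ℝ :=
  pullbackHelicity Φ V p (0, Pi.single 0 1) (0, Pi.single 1 1) (0, Pi.single 2 1)

lemma IsLagrangianEulerFlow.integral_fderiv_pullbackHelicityDensity_time
    {Φ V : ℝ × (Fin 3 → ℝ) → F} {g : ℝ → (Fin 3 → ℝ) → ℝ} (hflow : IsLagrangianEulerFlow Φ V g)
    {t : ℝ} (hΦ : ∀ a, Function.Periodic Φ (0, Pi.single a 1))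
    (hV : ∀ a, Function.Periodic V (0, Pi.single a 1))
    (hg : ∀ a, Function.Periodic (g t) (Pi.single a 1)) :
    ∫ s in Icc (0 : Fin 3 → ℝ) 1, fderiv ℝ (pullbackHelicityDensity Φ V) (t, s) (1, 0) = 0 := by
  let flux (i : Fin 3) : (Fin 3 → ℝ) → ℝ :=
    helicityFlux Φ V g t (Pi.single (i + 1) 1) (Pi.single (i + 2) 1)
  have hdiv (s : Fin 3 → ℝ) : fderiv ℝ (pullbackHelicityDensity Φ V) (t, s) (1, 0) =
      ∑ i, fderiv ℝ (flux i) s (Pi.single i 1) := by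
    rw [Fin.sum_univ_three]
    exact hflow.fderiv_pullbackHelicity_time_eq_divergence t s _ _ _
  simp only [hdiv]
  exact integral_divergence_eq_zero_of_periodic (fun i => hflow.contDiff_helicityFlux t _ _)
    fun i => periodic_helicityFlux (hΦ i) (hV i) (hg i) _ _

theorem IsLagrangianEulerFlow.integral_pullbackHelicityDensity_eq
    {Φ V : ℝ × (Fin 3 → ℝ) → F} {g : ℝ → (Fin 3 → ℝ) → ℝ} (hflow : IsLagrangianEulerFlow Φ V g)
    (hΦ : ∀ a, Function.Periodic Φ (0, Pi.single a 1))
    (hV : ∀ a, Function.Periodic V (0, Pi.single a 1))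
    (hg : ∀ t a, Function.Periodic (g t) (Pi.single a 1)) (t₁ t₂ : ℝ) :
    ∫ s in Icc (0 : Fin 3 → ℝ) 1, pullbackHelicityDensity Φ V (t₁, s) =
      ∫ s in Icc (0 : Fin 3 → ℝ) 1, pullbackHelicityDensity Φ V (t₂, s) := by
  have hH : ContDiff ℝ 1 (pullbackHelicityDensity Φ V) :=
    contDiff_pullbackHelicity hflow.contDiff_position hflow.contDiff_velocity _ _ _
  have hderiv (t : ℝ) : HasDerivAt
      (fun τ => ∫ s in Icc (0 : Fin 3 → ℝ) 1, pullbackHelicityDensity Φ V (τ, s)) 0 t := by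
    rw [← hflow.integral_fderiv_pullbackHelicityDensity_time hΦ hV (hg t)]
    exact hasDerivAt_setIntegral_of_continuous_deriv isCompact_Icc hH.continuous
      ((hH.continuous_fderiv one_ne_zero).clm_apply continuous_const)
      (fun τ s => hasDerivAt_slice (hH.differentiable_one (τ, s))) t
  exact is_const_of_deriv_eq_zero (fun t => (hderiv t).differentiableAt)
    (fun t => (hderiv t).deriv) t₁ t₂

end UnitCube

section EulerianFields

variable {P F : Type*} [NormedAddCommGroup P] [NormedSpace ℝ P]
  [NormedAddCommGroup F] [InnerProductSpace ℝ F] {u : ℝ × F → F} {h : ℝ × F → ℝ}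

/-- The acceleration `∂ₜu + (u·∇)u` of a fluid particle. -/
noncomputable def materialAcceleration (u : ℝ × F → F) (t : ℝ) (x : F) : F :=
  deriv (fun τ => u (τ, x)) t + fderiv ℝ (fun y => u (t, y)) x (u (t, x))

lemma materialAcceleration_eq_fderiv {t : ℝ} {x : F} (hu : DifferentiableAt ℝ u (t, x)) :
    materialAcceleration u t x = fderiv ℝ u (t, x) (1, u (t, x)) := by
  rw [materialAcceleration, (hasDerivAt_slice hu).deriv, fderiv_slice_apply hu, ← map_add,
    Prod.mk_add_mk, add_zero, zero_add]

lemma contDiff_materialAcceleration (hu : ContDiff ℝ 2 u) (t : ℝ) :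
    ContDiff ℝ 1 (materialAcceleration u t) := by
  have heq : materialAcceleration u t = fun x => fderiv ℝ u (t, x) (1, u (t, x)) :=
    funext fun x => materialAcceleration_eq_fderiv (hu.differentiable two_ne_zero (t, x))
  rw [heq]
  exact ((hu.fderiv_right (m := 1) (by norm_num)).comp (contDiff_prodMk_right t)).clm_apply
    (contDiff_const.prodMk ((hu.of_le one_le_two).comp (contDiff_prodMk_right t)))

lemma contDiff_enthalpy_of_euler (hu : ContDiff ℝ 2 u) {t : ℝ}
    (euler : ∀ x, HasFDerivAt (fun y => h (t, y)) (-innerSL ℝ (materialAcceleration u t x)) x) :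
    ContDiff ℝ 2 fun y => h (t, y) :=
  (contDiff_succ_iff_hasFDerivAt (n := 1)).2
    ⟨_, ((innerSL ℝ).contDiff.comp (contDiff_materialAcceleration hu t)).neg, euler⟩

lemma isLagrangianEulerFlow_of_euler (hu : ContDiff ℝ 2 u)
    (euler : ∀ t x, HasFDerivAt (fun y => h (t, y)) (-innerSL ℝ (materialAcceleration u t x)) x)
    {Ψ : ℝ × P → F} (hΨ : ContDiff ℝ 2 Ψ)
    (htrans : ∀ t s, deriv (fun τ => Ψ (τ, s)) t = u (t, Ψ (t, s))) :
    IsLagrangianEulerFlow Ψ (fun p => u (p.1, Ψ p)) fun t s => h (t, Ψ (t, s)) := by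
  have hdΨ := hΨ.differentiable two_ne_zero
  have htime (p : ℝ × P) : fderiv ℝ Ψ p (1, 0) = u (p.1, Ψ p) := by
    rw [← htrans, (hasDerivAt_slice (hdΨ p)).deriv]
  refine ⟨hΨ, hu.comp (contDiff_fst.prodMk hΨ), fun t => ?_, htime, fun t s v => ?_⟩
  · exact (contDiff_enthalpy_of_euler hu (euler t)).comp (hΨ.comp (contDiff_prodMk_right t))
  · have hdu := hu.differentiable two_ne_zero (t, Ψ (t, s))
    have hdslice : DifferentiableAt ℝ (fun z => Ψ (t, z)) s :=
      (hdΨ _).comp s (hasFDerivAt_prodMk_right t s).differentiableAt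
    have hchain := (euler t (Ψ (t, s))).comp s hdslice.hasFDerivAt
    rw [fderiv_comp_fst_prodMk_apply hdu (hdΨ _), htime, ← materialAcceleration_eq_fderiv hdu,
      ← fderiv_slice_apply (hdΨ _)]
    exact DFunLike.congr_fun hchain.fderiv v

theorem helicity_conserved_closed_3surface_general (hu : ContDiff ℝ 2 u)
    (euler : ∀ t x, HasFDerivAt (fun y => h (t, y)) (-innerSL ℝ (materialAcceleration u t x)) x)
    {Ψ : ℝ × (Fin 3 → ℝ) → F} (hΨ : ContDiff ℝ 2 Ψ)
    (hper : ∀ t s (a : Fin 3), Ψ (t, s + Pi.single a 1) = Ψ (t, s))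
    (htrans : ∀ t s, deriv (fun τ => Ψ (τ, s)) t = u (t, Ψ (t, s))) (t₁ t₂ : ℝ) :
    ∫ s in Icc (0 : Fin 3 → ℝ) 1, pullbackHelicityDensity Ψ (fun p => u (p.1, Ψ p)) (t₁, s) =
      ∫ s in Icc (0 : Fin 3 → ℝ) 1, pullbackHelicityDensity Ψ (fun p => u (p.1, Ψ p)) (t₂, s) := by
  have hΨper (a : Fin 3) : Function.Periodic Ψ (0, Pi.single a 1) := fun p => by
    simpa only [Prod.add_def, add_zero] using hper p.1 p.2 a
  refine (isLagrangianEulerFlow_of_euler hu euler hΨ htrans).integral_pullbackHelicityDensity_eq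
    hΨper (fun a p => ?_) (fun t a s => ?_) t₁ t₂
  · simp only [hΨper a p, Prod.fst_add, add_zero]
  · simp only [hper]

lemma helicityDensity_eq_pullbackHelicityDensity {n : ℕ}
    {u : ℝ × EuclideanSpace ℝ (Fin n) → EuclideanSpace ℝ (Fin n)} (hu : Differentiable ℝ u)
    {Ψ : ℝ × (Fin 3 → ℝ) → EuclideanSpace ℝ (Fin n)} (hΨ : Differentiable ℝ Ψ)
    (t : ℝ) (s : Fin 3 → ℝ) :
    helicityDensity u Ψ t s = pullbackHelicityDensity Ψ (fun p => u (p.1, Ψ p)) (t, s) := by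
  simp only [helicityDensity, vorticity2Form, pullbackHelicityDensity, pullbackHelicity,
    pullbackVelocity, pullbackVorticity, fderiv_slice_apply (hΨ (t, s)),
    fderiv_slice_apply (hu (t, Ψ (t, s))), fderiv_comp_fst_prodMk_apply (hu _) (hΨ (t, s))]
  ring

lemma hasFDerivAt_of_eq_neg_gradient [CompleteSpace F] {φ : F → ℝ} {a x : F}
    (hφ : DifferentiableAt ℝ φ x) (ha : a = -gradient φ x) :
    HasFDerivAt φ (-innerSL ℝ a) x := by
  rw [ha, map_neg, neg_neg]
  exact hφ.hasGradientAt.hasFDerivAt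

end EulerianFields

/-- Helicity conservation on closed moving 3-surfaces in isentropic flow. -/
theorem helicity_conserved_closed_3surface (n : ℕ) (hn : 1 ≤ n)
    (u : ℝ × EuclideanSpace ℝ (Fin n) → EuclideanSpace ℝ (Fin n))
    (hu : ContDiff ℝ (⊤ : ℕ∞) u)
    (h : ℝ × EuclideanSpace ℝ (Fin n) → ℝ) (hh : ContDiff ℝ 1 h)
    (euler : ∀ (t : ℝ) (x : EuclideanSpace ℝ (Fin n)),
      deriv (fun τ => u (τ, x)) t + fderiv ℝ (fun y => u (t, y)) x (u (t, x))
        = -gradient (fun y => h (t, y)) x)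
    (Ψ : ℝ × (Fin 3 → ℝ) → EuclideanSpace ℝ (Fin n)) (hΨ : ContDiff ℝ 2 Ψ)
    (hper : ∀ (t : ℝ) (s : Fin 3 → ℝ) (a : Fin 3), Ψ (t, s + Pi.single a 1) = Ψ (t, s))
    (htrans : ∀ (t : ℝ) (s : Fin 3 → ℝ), deriv (fun τ => Ψ (τ, s)) t = u (t, Ψ (t, s))) :
    ∀ t₁ t₂ : ℝ,
      (∫ s in Set.Icc (0 : Fin 3 → ℝ) 1, helicityDensity u Ψ t₁ s)
        = ∫ s in Set.Icc (0 : Fin 3 → ℝ) 1, helicityDensity u Ψ t₂ s := by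
  intro t₁ t₂
  have hgrad (t : ℝ) (x : EuclideanSpace ℝ (Fin n)) :=
    hasFDerivAt_of_eq_neg_gradient
      ((hh.comp (contDiff_prodMk_right t)).differentiable_one x) (euler t x)
  have hu₂ : ContDiff ℝ 2 u := contDiff_infty.1 hu 2
  simp only [helicityDensity_eq_pullbackHelicityDensity (hu₂.differentiable two_ne_zero)
    (hΨ.differentiable two_ne_zero)]
  exact helicity_conserved_closed_3surface_general hu₂ hgrad hΨ hper htrans t₁ t₂
end

section
/- (Three-dimensional entropy circulation constants of motion.) Let u : ℝ × ℝ³ → ℝ³ and ρ, S, g, h : ℝ × ℝ³ → ℝ be smooth with ρ > 0, satisfying ∂ₜu + (u·∇)u = ∇g + h∇S, ∂ₜρ + div(ρu) = 0, and ∂ₜS + ⟨u, ∇S⟩ = 0. Let φ : ℝ × ℝ³ → ℝ³ be a continuously differentiable flow of u (φ(0,x) = x, ∂ₜφ(t,x) = u(t,φ(t,x)), with ∂ₜD_xφ = D_xu(t,φ)∘D_xφ) such that φ(t,·) is injective for each t. Let f : ℝ × ℝ → ℝ be continuous and let V₀ ⊆ ℝ³ be a bounded measurable set. Writing ◦ =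 ⟨∇S, curl u⟩, the entropy circulation integral t ↦ ∫_{φ(t,·)''V₀} f(S(t,x), ◦(t,x)/ρ(t,x)) · ◦(t,x) dx is constant, equal to its value at t = 0. -/
open scoped RealInnerProductSpace

/-- The curl of a vector field on `ℝ³`. -/
noncomputable def curl3 (w : EuclideanSpace ℝ (Fin 3) → EuclideanSpace ℝ (Fin 3))
    (x : EuclideanSpace ℝ (Fin 3)) : EuclideanSpace ℝ (Fin 3) :=
  (WithLp.equiv 2 (Fin 3 → ℝ)).symm
    ![fderiv ℝ w x (EuclideanSpace.single 1 1) 2 - fderiv ℝ w x (EuclideanSpace.single 2 1) 1,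
      fderiv ℝ w x (EuclideanSpace.single 2 1) 0 - fderiv ℝ w x (EuclideanSpace.single 0 1) 2,
      fderiv ℝ w x (EuclideanSpace.single 0 1) 1 - fderiv ℝ w x (EuclideanSpace.single 1 1) 0]

/-- The entropy circulation scalar `◦ = ⟨∇S, curl u⟩` in three dimensions. -/
noncomputable def entCircScalar
    (u : ℝ × EuclideanSpace ℝ (Fin 3) → EuclideanSpace ℝ (Fin 3))
    (S : ℝ × EuclideanSpace ℝ (Fin 3) → ℝ)
    (t : ℝ) (x : EuclideanSpace ℝ (Fin 3)) : ℝ :=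
  ⟪gradient (fun y => S (t, y)) x, curl3 (fun y => u (t, y)) x⟫

/-!
Ertel's argument: writing `D = ∂ₜ + u·∇` and `L = D_x u`, commuting `D`
with spatial derivatives gives `D L = D_x (D u) - L ∘ L` and, as `D S = 0`, `D (dS) = -dS ∘ L`.
The axial vector of `L` is the vorticity `ω`, that of `L ∘ L` is `(tr L) ω - L ω`, so
`D (dS ω) = dS (curl (D u)) - (div u) dS ω`, and `dS` annihilates the curl of `∇g + h ∇S`.
Thus `◦ = dS ω` obeys the same continuity equation as `ρ`.

By Liouville's formula the Jacobian `J` of the flow satisfies `J' = (div u) J`, so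
`J ◦` and `J ρ` are constant along trajectories. Hence so are `◦ / ρ` and `S`, and the change of
variables `x ↦ φ (t, x)` gives the result.
-/

open MeasureTheory

local notation "ℝ³" => EuclideanSpace ℝ (Fin 3)

section Determinant

variable {E : Type*} [NormedAddCommGroup E] [NormedSpace ℝ E] [FiniteDimensional ℝ E]

theorem differentiable_clm_det : Differentiable ℝ fun A : E →L[ℝ] E => A.det := by
  let b := Module.finBasis ℝ E
  have hentry (i j) : Differentiable ℝ fun A : E →L[ℝ] E => LinearMap.toMatrix b b A i j := by
    simp only [LinearMap.toMatrix_apply, ContinuousLinearMap.coe_coe]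
    exact (LinearMap.toContinuousLinearMap (b.coord i)).differentiable.comp
      (ContinuousLinearMap.apply ℝ E (b j)).differentiable
  simp only [ContinuousLinearMap.det, ← LinearMap.det_toMatrix b, Matrix.det_apply]
  fun_prop

theorem hasDerivAt_det_one_add_smul (A : E →L[ℝ] E) :
    HasDerivAt (fun ε : ℝ => (1 + ε • A).det) (LinearMap.trace ℝ E A) 0 := by
  let b := Module.finBasis ℝ E
  let B := LinearMap.toMatrix b b (A : E →ₗ[ℝ] E)
  have hmatrix (ε : ℝ) : (1 + ε • A).det = (1 + ε • B).det := by
    rw [ContinuousLinearMap.det, ← LinearMap.det_toMatrix b]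
    simp [B, LinearMap.toMatrix_one]
  rw [funext fun ε => (hmatrix ε).trans (Matrix.det_one_add_smul ε B),
    LinearMap.trace_eq_matrix_trace ℝ b]
  have hlinear := ((hasDerivAt_id (0 : ℝ)).const_mul B.trace).const_add 1
  have hremainder := (Polynomial.hasDerivAt
    (1 + (Polynomial.X : Polynomial ℝ) • B.map Polynomial.C).det.divX.divX 0).mul
      (hasDerivAt_pow 2 (0 : ℝ))
  exact (hlinear.add hremainder).congr_deriv (by simp [B])

theorem hasDerivAt_det_of_hasDerivAt_comp {M : ℝ → E →L[ℝ] E} {A : E →L[ℝ] E} {t : ℝ}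
    (hM : HasDerivAt M (A.comp (M t)) t) :
    HasDerivAt (fun τ => (M τ).det) (LinearMap.trace ℝ E A * (M t).det) t := by
  have hdet := (differentiable_clm_det (M t)).hasFDerivAt
  have hline : HasDerivAt (fun ε : ℝ => M t + ε • A.comp (M t)) (A.comp (M t)) 0 := by
    simpa using ((hasDerivAt_id (0 : ℝ)).smul_const (A.comp (M t))).const_add (M t)
  have hfactor (ε : ℝ) : (M t + ε • A.comp (M t)).det = (1 + ε • A).det * (M t).det := by
    rw [ContinuousLinearMap.det, ContinuousLinearMap.det, ContinuousLinearMap.det,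
      ← LinearMap.det_comp]
    congr 1
  have hdet_line := hdet.comp_hasDerivAt_of_eq (0 : ℝ) hline (by simp)
  simp only [Function.comp_def, hfactor] at hdet_line
  rw [← hdet_line.unique ((hasDerivAt_det_one_add_smul A).mul_const (M t).det)]
  exact hdet.comp_hasDerivAt t hM

end Determinant

section MaterialDerivative

variable {E F G : Type*} [NormedAddCommGroup E] [NormedSpace ℝ E]
  [NormedAddCommGroup F] [NormedSpace ℝ F] [NormedAddCommGroup G] [NormedSpace ℝ G]

/-- The derivative `D_x a` of a time-dependent field in its space variable alone. -/
noncomputable def spatialFDeriv (a : ℝ × E → F) (p : ℝ × E) : E →L[ℝ] F :=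
  fderiv ℝ (fun y => a (p.1, y)) p.2

/-- The material derivative `∂ₜa + (u·∇)a` of a field `a` along the velocity `u`, encoded as the
space-time derivative of `a` in the direction `(1, u)`; see `materialDeriv_eq`. -/
noncomputable def materialDeriv (u : ℝ × E → E) (a : ℝ × E → F) (p : ℝ × E) : F :=
  fderiv ℝ a p (1, u p)

/-- The divergence in space of a velocity field, as the trace of its spatial derivative. -/
noncomputable def spatialDiv (u : ℝ × E → E) (p : ℝ × E) : ℝ :=
  LinearMap.trace ℝ E (spatialFDeriv u p)

theorem spatialFDeriv_eq {a : ℝ × E → F} {p : ℝ × E} (ha : DifferentiableAt ℝ a p) :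
    spatialFDeriv a p = (fderiv ℝ a p).comp (ContinuousLinearMap.inr ℝ ℝ E) :=
  (ha.hasFDerivAt.comp p.2 (hasFDerivAt_prodMk_right p.1 p.2)).fderiv

theorem spatialFDeriv_eq_of_differentiable {a : ℝ × E → F} (ha : Differentiable ℝ a) :
    spatialFDeriv a = fun p => (fderiv ℝ a p).comp (ContinuousLinearMap.inr ℝ ℝ E) :=
  funext fun p => spatialFDeriv_eq (ha p)

theorem materialDeriv_eq {u : ℝ × E → E} {a : ℝ × E → F} {p : ℝ × E}
    (ha : DifferentiableAt ℝ a p) :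
    materialDeriv u a p = deriv (fun τ => a (τ, p.2)) p.1 + spatialFDeriv a p (u p) := by
  have htime : deriv (fun τ => a (τ, p.2)) p.1 = fderiv ℝ a p (1, 0) :=
    (ha.hasFDerivAt.comp_hasDerivAt p.1
      ((hasDerivAt_id p.1).prodMk (hasDerivAt_const p.1 p.2))).deriv
  rw [htime, spatialFDeriv_eq ha, materialDeriv, ContinuousLinearMap.comp_apply,
    ContinuousLinearMap.inr_apply, ← map_add]
  simp

theorem differentiable_spatialFDeriv {a : ℝ × E → F} (ha : ContDiff ℝ 2 a) :
    Differentiable ℝ (spatialFDeriv a) := by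
  have ha' : Differentiable ℝ (fderiv ℝ a) :=
    (ha.fderiv_right (m := 1) (by norm_num)).differentiable one_ne_zero
  rw [spatialFDeriv_eq_of_differentiable (ha.differentiable two_ne_zero)]
  exact ha'.clm_comp (differentiable_const _)

theorem materialDeriv_spatialFDeriv {u : ℝ × E → E} {a : ℝ × E → F} {p : ℝ × E}
    (hu : DifferentiableAt ℝ u p) (ha : ContDiff ℝ 2 a) :
    materialDeriv u (spatialFDeriv a) p =
      spatialFDeriv (materialDeriv u a) p - (spatialFDeriv a p).comp (spatialFDeriv u p) := by
  have ha₁ : Differentiable ℝ a := ha.differentiable two_ne_zero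
  have ha₂ : DifferentiableAt ℝ (fderiv ℝ a) p :=
    (ha.fderiv_right (m := 1) (by norm_num)).differentiable one_ne_zero p
  have hdir : DifferentiableAt ℝ (fun q => ((1 : ℝ), u q)) p :=
    (differentiableAt_const 1).prodMk hu
  have hsymm : IsSymmSndFDerivAt ℝ a p := ha.contDiffAt.isSymmSndFDerivAt (by simp)
  have hleft (v : E) : materialDeriv u (spatialFDeriv a) p v =
      fderiv ℝ (fderiv ℝ a) p (1, u p) (0, v) := by
    rw [materialDeriv, spatialFDeriv_eq_of_differentiable ha₁,
      fderiv_clm_comp ha₂ (differentiableAt_const _)]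
    simp
  have hright (v : E) : spatialFDeriv (materialDeriv u a) p v =
      fderiv ℝ (fderiv ℝ a) p (0, v) (1, u p) + fderiv ℝ a p (0, fderiv ℝ u p (0, v)) := by
    have hdiff : DifferentiableAt ℝ (materialDeriv u a) p := ha₂.clm_apply hdir
    rw [spatialFDeriv_eq hdiff, ContinuousLinearMap.comp_apply]
    unfold materialDeriv
    rw [fderiv_clm_apply ha₂ hdir, (differentiableAt_const (1 : ℝ)).fderiv_prodMk hu]
    simp [add_comm]
  ext v
  rw [hleft, sub_apply, hright, hsymm.eq, spatialFDeriv_eq (ha₁ p),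
    spatialFDeriv_eq hu]
  simp

theorem materialDeriv_clm_apply {u : ℝ × E → E} {A : ℝ × E → F →L[ℝ] G} {b : ℝ × E → F}
    {p : ℝ × E} (hA : DifferentiableAt ℝ A p) (hb : DifferentiableAt ℝ b p) :
    materialDeriv u (fun q => A q (b q)) p =
      materialDeriv u A p (b p) + A p (materialDeriv u b p) := by
  simp [materialDeriv, fderiv_clm_apply hA hb, add_comm]

end MaterialDerivative

section Flow

variable {E F : Type*} [NormedAddCommGroup E] [NormedSpace ℝ E]
  [NormedAddCommGroup F] [NormedSpace ℝ F] {u φ : ℝ × E → E}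

/-- `φ` is a flow of the velocity field `u`, differentiable in space and starting from the identity
at time `0`. The equation of variations for `D_x φ` is part of the definition. -/
structure IsDifferentiableFlow (u φ : ℝ × E → E) : Prop where
  differentiable (t : ℝ) : Differentiable ℝ fun x => φ (t, x)
  map_zero (x : E) : φ (0, x) = x
  hasDerivAt (t : ℝ) (x : E) : HasDerivAt (fun τ => φ (τ, x)) (u (t, φ (t, x))) t
  hasDerivAt_spatialFDeriv (t : ℝ) (x : E) :
    HasDerivAt (fun τ => spatialFDeriv φ (τ, x))
      ((spatialFDeriv u (t, φ (t, x))).comp (spatialFDeriv φ (t, x))) t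

/-- `m` is the density of a quantity carried by the velocity field `u`: it satisfies the continuity
equation `∂ₜm + div (m u) = 0`, written here as `D m + m div u = 0`. -/
structure IsAdvectedDensity (u : ℝ × E → E) (m : ℝ × E → ℝ) : Prop where
  differentiable : Differentiable ℝ m
  materialDeriv_add (p : ℝ × E) : materialDeriv u m p + m p * spatialDiv u p = 0

namespace IsDifferentiableFlow

theorem hasDerivAt_comp (hφ : IsDifferentiableFlow u φ) {a : ℝ × E → F}
    (ha : Differentiable ℝ a) (t : ℝ) (x : E) :
    HasDerivAt (fun τ => a (τ, φ (τ, x))) (materialDeriv u a (t, φ (t, x))) t :=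
  (ha (t, φ (t, x))).hasFDerivAt.comp_hasDerivAt t ((hasDerivAt_id t).prodMk (hφ.hasDerivAt t x))

theorem eq_initial_of_materialDeriv_eq_zero (hφ : IsDifferentiableFlow u φ) {a : ℝ × E → F}
    (ha : Differentiable ℝ a) (ha₀ : ∀ p, materialDeriv u a p = 0) (t : ℝ) (x : E) :
    a (t, φ (t, x)) = a (0, x) := by
  have hderiv (s : ℝ) := hφ.hasDerivAt_comp ha s x
  simp only [ha₀] at hderiv
  simpa only [hφ.map_zero] using is_const_of_deriv_eq_zero
    (fun s => (hderiv s).differentiableAt) (fun s => (hderiv s).deriv) t 0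

theorem det_spatialFDeriv_zero (hφ : IsDifferentiableFlow u φ) (x : E) :
    (spatialFDeriv φ (0, x)).det = 1 := by
  simp only [spatialFDeriv, hφ.map_zero, fderiv_fun_id]
  exact LinearMap.det_id

variable [FiniteDimensional ℝ E]

theorem det_mul_density_eq_initial (hφ : IsDifferentiableFlow u φ) {m : ℝ × E → ℝ}
    (hm : IsAdvectedDensity u m) (t : ℝ) (x : E) :
    (spatialFDeriv φ (t, x)).det * m (t, φ (t, x)) = m (0, x) := by
  have hderiv (s : ℝ) :
      HasDerivAt (fun τ => (spatialFDeriv φ (τ, x)).det * m (τ, φ (τ, x))) 0 s := by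
    refine ((hasDerivAt_det_of_hasDerivAt_comp (hφ.hasDerivAt_spatialFDeriv s x)).mul
      (hφ.hasDerivAt_comp hm.differentiable s x)).congr_deriv ?_
    have hcont := hm.materialDeriv_add (s, φ (s, x))
    rw [spatialDiv] at hcont
    linear_combination (spatialFDeriv φ (s, x)).det * hcont
  simpa only [hφ.map_zero, hφ.det_spatialFDeriv_zero, one_mul] using is_const_of_deriv_eq_zero
    (fun s => (hderiv s).differentiableAt) (fun s => (hderiv s).deriv) t 0

theorem det_spatialFDeriv_pos (hφ : IsDifferentiableFlow u φ) {ρ : ℝ × E → ℝ}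
    (hρ : IsAdvectedDensity u ρ) (hρpos : ∀ p, 0 < ρ p) (t : ℝ) (x : E) :
    0 < (spatialFDeriv φ (t, x)).det :=
  pos_of_mul_pos_left ((hρpos (0, x)).trans_eq (hφ.det_mul_density_eq_initial hρ t x).symm)
    (hρpos _).le

theorem abs_det_smul_weighted_density_eq_initial (hφ : IsDifferentiableFlow u φ)
    {ρ m : ℝ × E → ℝ} {a : ℝ × E → F} (hρ : IsAdvectedDensity u ρ) (hρpos : ∀ p, 0 < ρ p)
    (hm : IsAdvectedDensity u m) (ha : Differentiable ℝ a) (ha₀ : ∀ p, materialDeriv u a p = 0)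
    (f : F × ℝ → ℝ) (t : ℝ) (x : E) :
    |(spatialFDeriv φ (t, x)).det| •
        (f (a (t, φ (t, x)), m (t, φ (t, x)) / ρ (t, φ (t, x))) * m (t, φ (t, x))) =
      f (a (0, x), m (0, x) / ρ (0, x)) * m (0, x) := by
  have hdet := hφ.det_spatialFDeriv_pos hρ hρpos t x
  rw [← hφ.eq_initial_of_materialDeriv_eq_zero ha ha₀ t x,
    ← hφ.det_mul_density_eq_initial hρ t x, ← hφ.det_mul_density_eq_initial hm t x,
    mul_div_mul_left _ _ hdet.ne', abs_of_pos hdet, smul_eq_mul, mul_left_comm]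

variable [MeasurableSpace E] [BorelSpace E] (μ : Measure E) [μ.IsAddHaarMeasure]

theorem setIntegral_image_weighted_density (hφ : IsDifferentiableFlow u φ) {ρ m : ℝ × E → ℝ}
    {a : ℝ × E → F} (hρ : IsAdvectedDensity u ρ) (hρpos : ∀ p, 0 < ρ p)
    (hm : IsAdvectedDensity u m) (ha : Differentiable ℝ a) (ha₀ : ∀ p, materialDeriv u a p = 0)
    (f : F × ℝ → ℝ) {V : Set E} (hV : MeasurableSet V) (t : ℝ)
    (hinj : Set.InjOn (fun x => φ (t, x)) V)
    (hint : IntegrableOn (fun x => f (a (0, x), m (0, x) / ρ (0, x)) * m (0, x)) V μ) :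
    IntegrableOn (fun x => f (a (t, x), m (t, x) / ρ (t, x)) * m (t, x))
        ((fun x => φ (t, x)) '' V) μ ∧
      ∫ x in (fun x => φ (t, x)) '' V, f (a (t, x), m (t, x) / ρ (t, x)) * m (t, x) ∂μ =
        ∫ x in V, f (a (0, x), m (0, x) / ρ (0, x)) * m (0, x) ∂μ := by
  have hderiv (x) (_ : x ∈ V) :
      HasFDerivWithinAt (fun x => φ (t, x)) (spatialFDeriv φ (t, x)) V x :=
    (hφ.differentiable t x).hasFDerivAt.hasFDerivWithinAt
  rw [integrableOn_image_iff_integrableOn_abs_det_fderiv_smul μ hV hderiv hinj,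
    integral_image_eq_integral_abs_det_fderiv_smul μ hV hderiv hinj]
  simp only [hφ.abs_det_smul_weighted_density_eq_initial hρ hρpos hm ha ha₀, hint, true_and]

end IsDifferentiableFlow

end Flow

section EuclideanCoordinates

variable {n : Type*} [Fintype n] [DecidableEq n]

theorem clm_apply_eq_sum_single {G : Type*} [NormedAddCommGroup G] [NormedSpace ℝ G]
    (A : EuclideanSpace ℝ n →L[ℝ] G) (v : EuclideanSpace ℝ n) :
    A v = ∑ i, v i • A (EuclideanSpace.single i 1) := by
  conv_lhs => rw [← (EuclideanSpace.basisFun n ℝ).sum_repr v]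
  simp

theorem trace_eq_sum_apply_single (A : EuclideanSpace ℝ n →L[ℝ] EuclideanSpace ℝ n) :
    LinearMap.trace ℝ (EuclideanSpace ℝ n) A = ∑ i, A (EuclideanSpace.single i 1) i := by
  simp [LinearMap.trace_eq_sum_inner _ (EuclideanSpace.basisFun n ℝ),
    EuclideanSpace.inner_single_left]

theorem sum_fderiv_smul_apply_single {u : ℝ × EuclideanSpace ℝ n → EuclideanSpace ℝ n}
    {ρ : ℝ × EuclideanSpace ℝ n → ℝ} (hu : Differentiable ℝ u) (hρ : Differentiable ℝ ρ)
    (t : ℝ) (x : EuclideanSpace ℝ n) :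
    ∑ i, fderiv ℝ (fun y => ρ (t, y) • u (t, y)) x (EuclideanSpace.single i 1) i =
      spatialFDeriv ρ (t, x) (u (t, x)) + ρ (t, x) * spatialDiv u (t, x) := by
  have hu' : DifferentiableAt ℝ (fun y => u (t, y)) x := by fun_prop
  have hρ' : DifferentiableAt ℝ (fun y => ρ (t, y)) x := by fun_prop
  rw [fderiv_fun_smul hρ' hu', spatialDiv, trace_eq_sum_apply_single,
    clm_apply_eq_sum_single (spatialFDeriv ρ (t, x)), Finset.mul_sum, ← Finset.sum_add_distrib]
  refine Finset.sum_congr rfl fun i _ => ?_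
  simp [spatialFDeriv, mul_comm, add_comm]

end EuclideanCoordinates

section Curl

theorem isSymmetric_fderiv_gradient {H : Type*} [NormedAddCommGroup H] [InnerProductSpace ℝ H]
    [CompleteSpace H] {g : H → ℝ} (hg : ContDiff ℝ 2 g) (x : H) :
    (fderiv ℝ (gradient g) x).toLinearMap.IsSymmetric := by
  have hg' : DifferentiableAt ℝ (fderiv ℝ g) x :=
    (hg.fderiv_right (m := 1) (by norm_num)).differentiable one_ne_zero x
  have hsymm : IsSymmSndFDerivAt ℝ g x := hg.contDiffAt.isSymmSndFDerivAt (by simp)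
  have hinner (v w : H) : ⟪fderiv ℝ (gradient g) x v, w⟫ = fderiv ℝ (fderiv ℝ g) x v w := by
    have hgrad : fderiv ℝ (gradient g) x =
        (InnerProductSpace.toDual ℝ H).symm.toContinuousLinearEquiv.toContinuousLinearMap.comp
          (fderiv ℝ (fderiv ℝ g) x) :=
      ((InnerProductSpace.toDual ℝ H).symm.toContinuousLinearEquiv.hasFDerivAt.comp x
        hg'.hasFDerivAt).fderiv
    simp [hgrad]
  intro v w
  change ⟪fderiv ℝ (gradient g) x v, w⟫ = ⟪v, fderiv ℝ (gradient g) x w⟫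
  rw [hinner, real_inner_comm, hinner, hsymm.eq]

theorem differentiable_gradient {H : Type*} [NormedAddCommGroup H] [InnerProductSpace ℝ H]
    [CompleteSpace H] {g : H → ℝ} (hg : ContDiff ℝ 2 g) : Differentiable ℝ (gradient g) :=
  (InnerProductSpace.toDual ℝ H).symm.toContinuousLinearEquiv.differentiable.comp
    ((hg.fderiv_right (m := 1) (by norm_num)).differentiable one_ne_zero)

/-- The axial vector of the antisymmetric part of a linear map of `ℝ³`, normalized so that the curl
of a field is the axial vector of its derivative. -/
noncomputable def axialVector : (ℝ³ →L[ℝ] ℝ³) →L[ℝ] ℝ³ :=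
  LinearMap.toContinuousLinearMap
    { toFun := fun A =>
        !₂[A (EuclideanSpace.single 1 1) 2 - A (EuclideanSpace.single 2 1) 1,
          A (EuclideanSpace.single 2 1) 0 - A (EuclideanSpace.single 0 1) 2,
          A (EuclideanSpace.single 0 1) 1 - A (EuclideanSpace.single 1 1) 0]
      map_add' := fun A B => by ext i; fin_cases i <;> simp <;> ring
      map_smul' := fun c A => by ext i; fin_cases i <;> simp <;> ring }

theorem axialVector_apply (A : ℝ³ →L[ℝ] ℝ³) :
    axialVector A =
      !₂[A (EuclideanSpace.single 1 1) 2 - A (EuclideanSpace.single 2 1) 1,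
        A (EuclideanSpace.single 2 1) 0 - A (EuclideanSpace.single 0 1) 2,
        A (EuclideanSpace.single 0 1) 1 - A (EuclideanSpace.single 1 1) 0] := rfl

theorem curl3_eq_axialVector_fderiv (w : ℝ³ → ℝ³) (x : ℝ³) :
    curl3 w x = axialVector (fderiv ℝ w x) := rfl

theorem axialVector_comp_self (A : ℝ³ →L[ℝ] ℝ³) :
    axialVector (A.comp A) =
      LinearMap.trace ℝ ℝ³ A • axialVector A - A (axialVector A) := by
  have hcol (j : Fin 3) := clm_apply_eq_sum_single A (A (EuclideanSpace.single j 1))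
  rw [trace_eq_sum_apply_single, clm_apply_eq_sum_single A (axialVector A)]
  ext i
  fin_cases i <;>
    simp only [axialVector_apply, ContinuousLinearMap.comp_apply, hcol, Fin.sum_univ_three,
      PiLp.add_apply, PiLp.sub_apply, PiLp.smul_apply, smul_eq_mul, Fin.zero_eta, Fin.mk_one,
      Fin.reduceFinMk, Matrix.cons_val] <;>
    ring

theorem axialVector_eq_zero_of_isSymmetric {A : ℝ³ →L[ℝ] ℝ³}
    (hA : A.toLinearMap.IsSymmetric) : axialVector A = 0 := by
  have hentry (i j : Fin 3) :
      A (EuclideanSpace.single i 1) j = A (EuclideanSpace.single j 1) i := by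
    simpa [EuclideanSpace.inner_single_left, EuclideanSpace.inner_single_right] using
      hA (EuclideanSpace.single i 1) (EuclideanSpace.single j 1)
  ext i
  fin_cases i <;> simp [axialVector_apply, hentry]

theorem inner_axialVector_smulRight (l : ℝ³ →L[ℝ] ℝ) (b : ℝ³) :
    ⟪b, axialVector (l.smulRight b)⟫ = 0 := by
  simp only [axialVector_apply, ContinuousLinearMap.smulRight_apply, PiLp.smul_apply, smul_eq_mul,
    PiLp.inner_apply, RCLike.inner_apply, conj_trivial, Fin.sum_univ_three, Matrix.cons_val]
  ring

theorem inner_gradient_curl3_gradient_add_smul_gradient {g h S : ℝ³ → ℝ} (hg : ContDiff ℝ 2 g)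
    (hh : Differentiable ℝ h) (hS : ContDiff ℝ 2 S) (x : ℝ³) :
    ⟪gradient S x, curl3 (fun y => gradient g y + h y • gradient S y) x⟫ = 0 := by
  have hg' := differentiable_gradient hg x
  have hS' := differentiable_gradient hS x
  rw [curl3_eq_axialVector_fderiv, fderiv_fun_add hg' ((hh x).fun_smul hS'),
    fderiv_fun_smul (hh x) hS', map_add, map_add, map_smul,
    axialVector_eq_zero_of_isSymmetric (isSymmetric_fderiv_gradient hg x),
    axialVector_eq_zero_of_isSymmetric (isSymmetric_fderiv_gradient hS x), smul_zero, zero_add,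
    zero_add, inner_axialVector_smulRight]

end Curl

section ErtelTheorem

variable {u : ℝ × ℝ³ → ℝ³} {S : ℝ × ℝ³ → ℝ}

theorem entCircScalar_eq_spatialFDeriv_axialVector (u : ℝ × ℝ³ → ℝ³) (S : ℝ × ℝ³ → ℝ)
    (p : ℝ × ℝ³) :
    entCircScalar u S p.1 p.2 = spatialFDeriv S p (axialVector (spatialFDeriv u p)) :=
  inner_gradient_left

theorem differentiable_axialVector_spatialFDeriv (hu : ContDiff ℝ 2 u) :
    Differentiable ℝ fun p => axialVector (spatialFDeriv u p) :=
  axialVector.differentiable.comp (differentiable_spatialFDeriv hu)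

theorem differentiable_entCircScalar (hu : ContDiff ℝ 2 u) (hS : ContDiff ℝ 2 S) :
    Differentiable ℝ fun p : ℝ × ℝ³ => entCircScalar u S p.1 p.2 := by
  simp only [entCircScalar_eq_spatialFDeriv_axialVector]
  exact (differentiable_spatialFDeriv hS).clm_apply (differentiable_axialVector_spatialFDeriv hu)

theorem materialDeriv_axialVector_spatialFDeriv (hu : ContDiff ℝ 2 u) (p : ℝ × ℝ³) :
    materialDeriv u (fun q => axialVector (spatialFDeriv u q)) p =
      curl3 (fun y => materialDeriv u u (p.1, y)) p.2
        - spatialDiv u p • axialVector (spatialFDeriv u p)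
        + spatialFDeriv u p (axialVector (spatialFDeriv u p)) := by
  have hchain : materialDeriv u (fun q => axialVector (spatialFDeriv u q)) p =
      axialVector (materialDeriv u (spatialFDeriv u) p) := by
    have hderiv := axialVector.hasFDerivAt.comp p (differentiable_spatialFDeriv hu p).hasFDerivAt
    exact congrArg (fun A : ℝ × ℝ³ →L[ℝ] ℝ³ => A (1, u p)) hderiv.fderiv
  rw [hchain, materialDeriv_spatialFDeriv (hu.differentiable two_ne_zero p) hu, map_sub,
    axialVector_comp_self, curl3_eq_axialVector_fderiv, ← sub_add]
  rfl

theorem materialDeriv_entCircScalar (hu : ContDiff ℝ 2 u) (hS : ContDiff ℝ 2 S)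
    (hS₀ : ∀ p, materialDeriv u S p = 0) (p : ℝ × ℝ³) :
    materialDeriv u (fun q => entCircScalar u S q.1 q.2) p =
      ⟪gradient (fun y => S (p.1, y)) p.2, curl3 (fun y => materialDeriv u u (p.1, y)) p.2⟫
        - entCircScalar u S p.1 p.2 * spatialDiv u p := by
  have hdS : materialDeriv u (spatialFDeriv S) p =
      -(spatialFDeriv S p).comp (spatialFDeriv u p) := by
    rw [materialDeriv_spatialFDeriv (hu.differentiable two_ne_zero p) hS, funext hS₀]
    simp [spatialFDeriv]
  simp only [entCircScalar_eq_spatialFDeriv_axialVector]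
  rw [materialDeriv_clm_apply (differentiable_spatialFDeriv hS p)
    (differentiable_axialVector_spatialFDeriv hu p), hdS,
    materialDeriv_axialVector_spatialFDeriv hu, inner_gradient_left]
  simp only [spatialFDeriv, neg_apply, ContinuousLinearMap.comp_apply, map_add, map_sub, map_smul,
    smul_eq_mul]
  ring

theorem isAdvectedDensity_entCircScalar {g h : ℝ × ℝ³ → ℝ} (hu : ContDiff ℝ 2 u)
    (hS : ContDiff ℝ 2 S) (hg : ContDiff ℝ 2 g) (hh : Differentiable ℝ h)
    (euler : ∀ p, materialDeriv u u p =
      gradient (fun y => g (p.1, y)) p.2 + h p • gradient (fun y => S (p.1, y)) p.2)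
    (hS₀ : ∀ p, materialDeriv u S p = 0) :
    IsAdvectedDensity u fun p => entCircScalar u S p.1 p.2 where
  differentiable := differentiable_entCircScalar hu hS
  materialDeriv_add p := by
    have hforce : ⟪gradient (fun y => S (p.1, y)) p.2,
        curl3 (fun y => materialDeriv u u (p.1, y)) p.2⟫ = 0 := by
      simp only [euler]
      exact inner_gradient_curl3_gradient_add_smul_gradient (g := fun y => g (p.1, y))
        (h := fun y => h (p.1, y)) (by fun_prop) (by fun_prop) (by fun_prop) p.2
    rw [materialDeriv_entCircScalar hu hS hS₀, hforce]
    ring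

end ErtelTheorem

theorem integrableOn_of_continuous_of_isBounded {X F : Type*} [MeasurableSpace X]
    [PseudoMetricSpace X] [ProperSpace X] [OpensMeasurableSpace X] [NormedAddCommGroup F]
    {μ : Measure X} [IsFiniteMeasureOnCompacts μ] {w : X → F} (hw : Continuous w) {V : Set X}
    (hV : Bornology.IsBounded V) : IntegrableOn w V μ :=
  (hw.locallyIntegrable.integrableOn_isCompact hV.isCompact_closure).mono_set subset_closure

theorem integrableOn_weighted_entCircScalar {u : ℝ × ℝ³ → ℝ³} {ρ S : ℝ × ℝ³ → ℝ}
    (hu : ContDiff ℝ 2 u) (hρ : Continuous ρ) (hS : ContDiff ℝ 2 S) (hρpos : ∀ t x, 0 < ρ (t, x))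
    {f : ℝ × ℝ → ℝ} (hf : Continuous f) {V : Set ℝ³} (hV : Bornology.IsBounded V) (t : ℝ) :
    IntegrableOn (fun x =>
      f (S (t, x), entCircScalar u S t x / ρ (t, x)) * entCircScalar u S t x) V := by
  have hcirc : Continuous fun x => entCircScalar u S t x :=
    (differentiable_entCircScalar hu hS).continuous.comp
      (f := fun x => (t, x)) (Continuous.prodMk_right t)
  have hratio : Continuous fun x => entCircScalar u S t x / ρ (t, x) :=
    hcirc.div (by fun_prop) fun x => (hρpos t x).ne'
  have hentropy : Continuous fun x => S (t, x) := hS.continuous.comp (Continuous.prodMk_right t)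
  have hweight : Continuous fun x => f (S (t, x), entCircScalar u S t x / ρ (t, x)) :=
    hf.comp (hentropy.prodMk hratio)
  exact integrableOn_of_continuous_of_isBounded (hweight.mul hcirc) hV

theorem entropy_circulation_constant_of_motion_3d_general
    {u : ℝ × ℝ³ → ℝ³} {ρ S g h : ℝ × ℝ³ → ℝ} (hu : ContDiff ℝ 2 u) (hρ : Differentiable ℝ ρ)
    (hS : ContDiff ℝ 2 S) (hg : ContDiff ℝ 2 g) (hh : Differentiable ℝ h)
    (hρpos : ∀ t x, 0 < ρ (t, x))
    (euler : ∀ t x, deriv (fun τ => u (τ, x)) t + fderiv ℝ (fun y => u (t, y)) x (u (t, x))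
      = gradient (fun y => g (t, y)) x + h (t, x) • gradient (fun y => S (t, y)) x)
    (continuity : ∀ t x, deriv (fun τ => ρ (τ, x)) t
      + ∑ i : Fin 3,
          fderiv ℝ (fun y => ρ (t, y) • u (t, y)) x (EuclideanSpace.single i 1) i = 0)
    (entropy : ∀ t x,
      deriv (fun τ => S (τ, x)) t + ⟪u (t, x), gradient (fun y => S (t, y)) x⟫ = 0)
    {φ : ℝ × ℝ³ → ℝ³} (hφ : IsDifferentiableFlow u φ) (f : ℝ × ℝ → ℝ)
    {V₀ : Set ℝ³} (hV₀ : MeasurableSet V₀) (hinj : ∀ t, Set.InjOn (fun x => φ (t, x)) V₀)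
    (hint : IntegrableOn (fun x =>
      f (S (0, x), entCircScalar u S 0 x / ρ (0, x)) * entCircScalar u S 0 x) V₀) (t : ℝ) :
    IntegrableOn (fun x => f (S (t, x), entCircScalar u S t x / ρ (t, x)) * entCircScalar u S t x)
        ((fun y => φ (t, y)) '' V₀) ∧
      ∫ x in (fun y => φ (t, y)) '' V₀,
          f (S (t, x), entCircScalar u S t x / ρ (t, x)) * entCircScalar u S t x
        = ∫ x in V₀,
            f (S (0, x), entCircScalar u S 0 x / ρ (0, x)) * entCircScalar u S 0 x := by
  have hu₁ := hu.differentiable two_ne_zero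
  have hS₁ := hS.differentiable two_ne_zero
  have haccel (p) := (materialDeriv_eq (u := u) (hu₁ p)).trans (euler p.1 p.2)
  have hS₀ (p) : materialDeriv u S p = 0 := by
    rw [materialDeriv_eq (hS₁ p), ← entropy p.1 p.2, inner_gradient_right]
    rfl
  have hρ_density : IsAdvectedDensity u ρ := ⟨hρ, fun p => by
    rw [materialDeriv_eq (hρ p), add_assoc, ← sum_fderiv_smul_apply_single hu₁ hρ]
    exact continuity p.1 p.2⟩
  exact hφ.setIntegral_image_weighted_density volume hρ_density (fun p => hρpos p.1 p.2)
    (isAdvectedDensity_entCircScalar hu hS hg hh haccel hS₀) hS₁ hS₀ f hV₀ t (hinj t) hint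

/-- Three-dimensional entropy circulation constants of motion: the integral
`∫_{φ(t)(V₀)} f(S, ◦/ρ) ◦ dx` over a moving domain is constant in time. -/
theorem entropy_circulation_constant_of_motion_3d
    (u : ℝ × EuclideanSpace ℝ (Fin 3) → EuclideanSpace ℝ (Fin 3))
    (ρ S g h : ℝ × EuclideanSpace ℝ (Fin 3) → ℝ)
    (hu : ContDiff ℝ (⊤ : ℕ∞) u) (hρ : ContDiff ℝ (⊤ : ℕ∞) ρ) (hS : ContDiff ℝ (⊤ : ℕ∞) S)
    (hg : ContDiff ℝ (⊤ : ℕ∞) g) (hh : ContDiff ℝ (⊤ : ℕ∞) h)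
    (hρpos : ∀ (t : ℝ) (x : EuclideanSpace ℝ (Fin 3)), 0 < ρ (t, x))
    (euler : ∀ (t : ℝ) (x : EuclideanSpace ℝ (Fin 3)),
      deriv (fun τ => u (τ, x)) t + fderiv ℝ (fun y => u (t, y)) x (u (t, x))
        = gradient (fun y => g (t, y)) x + h (t, x) • gradient (fun y => S (t, y)) x)
    (continuity : ∀ (t : ℝ) (x : EuclideanSpace ℝ (Fin 3)),
      deriv (fun τ => ρ (τ, x)) t
        + ∑ i : Fin 3,
            fderiv ℝ (fun y => ρ (t, y) • u (t, y)) x (EuclideanSpace.single i 1) i = 0)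
    (entropy : ∀ (t : ℝ) (x : EuclideanSpace ℝ (Fin 3)),
      deriv (fun τ => S (τ, x)) t + ⟪u (t, x), gradient (fun y => S (t, y)) x⟫ = 0)
    (φ : ℝ × EuclideanSpace ℝ (Fin 3) → EuclideanSpace ℝ (Fin 3))
    (hφ : ContDiff ℝ 1 φ)
    (hφ0 : ∀ x, φ (0, x) = x)
    (hflow : ∀ (t : ℝ) (x : EuclideanSpace ℝ (Fin 3)),
      HasDerivAt (fun τ => φ (τ, x)) (u (t, φ (t, x))) t)
    (hflowD : ∀ (t : ℝ) (x : EuclideanSpace ℝ (Fin 3)),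
      HasDerivAt (fun τ => fderiv ℝ (fun y => φ (τ, y)) x)
        ((fderiv ℝ (fun y => u (t, y)) (φ (t, x))).comp
          (fderiv ℝ (fun y => φ (t, y)) x)) t)
    (hinj : ∀ t : ℝ, Function.Injective (fun x => φ (t, x)))
    (f : ℝ × ℝ → ℝ) (hf : Continuous f)
    (V₀ : Set (EuclideanSpace ℝ (Fin 3)))
    (hV₀b : Bornology.IsBounded V₀) (hV₀m : MeasurableSet V₀) :
    ∀ t : ℝ,
      (∫ x in (fun y => φ (t, y)) '' V₀,
          f (S (t, x), entCircScalar u S t x / ρ (t, x)) * entCircScalar u S t x)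
        = ∫ x in V₀,
            f (S (0, x), entCircScalar u S 0 x / ρ (0, x)) * entCircScalar u S 0 x := by
  have hu₂ : ContDiff ℝ 2 u := hu.of_le (WithTop.coe_le_coe.2 le_top)
  have hS₂ : ContDiff ℝ 2 S := hS.of_le (WithTop.coe_le_coe.2 le_top)
  have hρ₁ : Differentiable ℝ ρ := hρ.differentiable (by simp)
  have hflowφ : IsDifferentiableFlow u φ :=
    ⟨fun t => (hφ.differentiable one_ne_zero).comp (by fun_prop), hφ0, hflow, hflowD⟩
  exact fun t => (entropy_circulation_constant_of_motion_3d_general hu₂ hρ₁ hS₂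
    (hg.of_le (WithTop.coe_le_coe.2 le_top)) (hh.differentiable (by simp)) hρpos euler continuity
    entropy hflowφ f hV₀m (fun t => (hinj t).injOn)
    (integrableOn_weighted_entCircScalar hu₂ hρ₁.continuous hS₂ hρpos hf hV₀b 0) t).2
end
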